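/- arXiv:2512.23524 — 2 statements merged into one kernel-verified Lean document; each statement's English description precedes it below -/
import Mathlib

section
/- Lower bound for the θ-update (step in the SharpDRO proof): With θ_{t+1} := θ_t − η_θ g'_t, E[L(θ_{t+1}, ω_t)] ≥ E[L(θ_t, ω_t)] − (3η_θ/2 + l²ρ²η_θ/2 + l η_θ² (2ρ²l² + ρl + 1)) E‖∇_θ L(θ_t, ω_t)‖² − (l²ρ²η_θ/2 + (l η_θ²/2)(5ρ²l² + 2)) σ²/M. -/
open MeasureTheory

/-- Partial gradient of `L` with respect to the first variable `θ`. -/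
noncomputable def gradTheta {d n : ℕ}
    (L : EuclideanSpace ℝ (Fin d) → EuclideanSpace ℝ (Fin n) → ℝ)
    (θ : EuclideanSpace ℝ (Fin d)) (ω : EuclideanSpace ℝ (Fin n)) :
    EuclideanSpace ℝ (Fin d) :=
  gradient (fun θ' => L θ' ω) θ

/-- Partial gradient of `L` with respect to the second variable `ω`. -/
noncomputable def gradOmega {d n : ℕ}
    (L : EuclideanSpace ℝ (Fin d) → EuclideanSpace ℝ (Fin n) → ℝ)
    (θ : EuclideanSpace ℝ (Fin d)) (ω : EuclideanSpace ℝ (Fin n)) :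
    EuclideanSpace ℝ (Fin n) :=
  gradient (fun ω' => L θ ω') ω

open ProbabilityTheory

/-!
Write `G = ∇_θ L(θ_t, ω_t)` and `H = ∇_θ L(θ_t + ρ g_t, ω_t)`. Since `∇_θ L(·, ω_t)` is
`l`-Lipschitz, `L(·, ω_t)` lies above its tangent plane at `θ_t` minus `l / 2` times the squared
distance, so the loss in one step is at most `η E⟪G, g'_t⟫ + l η² / 2 * E‖g'_t‖²`.
The vector `G` is known before `g'_t` is drawn, hence `E⟪G, g'_t⟫ = E⟪G, H⟫`, and by orthogonality
a second moment exceeds that of the conditional mean by at most the variance bound.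
Both terms are thereby reduced to `E‖G‖²` and `E‖H - G‖²`, and the latter is at most
`l² ρ² E‖g_t‖² ≤ l² ρ² (E‖G‖² + σ² / M)`.
-/

section Smoothness

open scoped Gradient NNReal RealInnerProductSpace

variable {E : Type*} [NormedAddCommGroup E]

lemma norm_sq_le_two_mul_norm_sq_add_norm_sub_sq (a b : E) :
    ‖b‖ ^ 2 ≤ 2 * ‖a‖ ^ 2 + 2 * ‖b - a‖ ^ 2 :=
  calc ‖b‖ ^ 2 ≤ (‖a‖ + ‖b - a‖) ^ 2 := by gcongr; exact norm_le_norm_add_norm_sub' b a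
    _ ≤ 2 * (‖a‖ ^ 2 + ‖b - a‖ ^ 2) := add_sq_le
    _ = 2 * ‖a‖ ^ 2 + 2 * ‖b - a‖ ^ 2 := mul_add ..

variable [InnerProductSpace ℝ E]

lemma inner_le_norm_sq_add_norm_sub_sq (a b : E) :
    ⟪a, b⟫ ≤ 3 / 2 * ‖a‖ ^ 2 + 1 / 2 * ‖b - a‖ ^ 2 := by
  have young : ⟪a, b - a⟫ ≤ 1 / 2 * ‖a‖ ^ 2 + 1 / 2 * ‖b - a‖ ^ 2 := by
    linarith [real_inner_le_norm a (b - a), two_mul_le_add_sq ‖a‖ ‖b - a‖]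
  rw [inner_sub_right, real_inner_self_eq_norm_sq] at young
  linarith

variable [CompleteSpace E] {f : E → ℝ} {K : ℝ≥0}

lemma hasDerivAt_comp_add_smul {x v : E} {t : ℝ} (hf : DifferentiableAt ℝ f (x + t • v)) :
    HasDerivAt (fun s : ℝ => f (x + s • v)) ⟪∇ f (x + t • v), v⟫ t := by
  have line : HasDerivAt (fun s : ℝ => x + s • v) v t := by
    simpa using ((hasDerivAt_id t).smul_const v).const_add x
  simpa [Function.comp_def] using hf.hasGradientAt.hasFDerivAt.comp_hasDerivAt t line

lemma inner_gradient_add_smul_ge_of_lipschitzWith (hK : LipschitzWith K (∇ f)) (x v : E)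
    {t : ℝ} (ht : 0 ≤ t) :
    ⟪∇ f x, v⟫ - K * t * ‖v‖ ^ 2 ≤ ⟪∇ f (x + t • v), v⟫ := by
  have lip : ‖∇ f x - ∇ f (x + t • v)‖ ≤ K * (t * ‖v‖) := by
    simpa [norm_smul, abs_of_nonneg ht] using hK.norm_sub_le x (x + t • v)
  have bound : ⟪∇ f x - ∇ f (x + t • v), v⟫ ≤ K * t * ‖v‖ ^ 2 :=
    calc ⟪∇ f x - ∇ f (x + t • v), v⟫
        ≤ ‖∇ f x - ∇ f (x + t • v)‖ * ‖v‖ := real_inner_le_norm _ _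
      _ ≤ K * (t * ‖v‖) * ‖v‖ := by gcongr
      _ = K * t * ‖v‖ ^ 2 := by ring
  rw [inner_sub_left] at bound
  linarith

lemma quadratic_lower_bound_of_lipschitzWith_gradient (hf : Differentiable ℝ f)
    (hK : LipschitzWith K (∇ f)) (x v : E) :
    f x + ⟪∇ f x, v⟫ - K / 2 * ‖v‖ ^ 2 ≤ f (x + v) := by
  let φ : ℝ → ℝ := fun t => f (x + t • v) - t * ⟪∇ f x, v⟫ + t ^ 2 * (K / 2 * ‖v‖ ^ 2)
  have hφ (t : ℝ) :
      HasDerivAt φ (⟪∇ f (x + t • v), v⟫ - ⟪∇ f x, v⟫ + K * t * ‖v‖ ^ 2) t := by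
    refine (((hasDerivAt_comp_add_smul (hf _)).sub ((hasDerivAt_id t).mul_const _)).add
      ((hasDerivAt_pow 2 t).mul_const _)).congr_deriv ?_
    push_cast
    ring
  have mono : MonotoneOn φ (Set.Icc 0 1) := by
    refine monotoneOn_of_hasDerivWithinAt_nonneg (convex_Icc 0 1)
      (fun t _ => (hφ t).continuousAt.continuousWithinAt)
      (fun t _ => (hφ t).hasDerivWithinAt) fun t ht => ?_
    linarith [inner_gradient_add_smul_ge_of_lipschitzWith hK x v (interior_subset ht).1]
  have endpoints : φ 0 ≤ φ 1 := mono (by simp) (by simp) zero_le_one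
  simp only [φ, zero_smul, one_smul, add_zero, zero_mul, one_mul, sub_zero, one_pow,
    zero_pow two_ne_zero] at endpoints
  linarith

end Smoothness

section ConditionalExpectation

variable {E Ω : Type*} [NormedAddCommGroup E] [NormedSpace ℝ E] {m mΩ : MeasurableSpace Ω}
  {P : Measure Ω} {X Y : Ω → E}

lemma integral_le_of_condExp_le [IsProbabilityMeasure P] (hm : m ≤ mΩ) {f : Ω → ℝ} {c : ℝ}
    (hf : ∀ᵐ x ∂P, P[f | m] x ≤ c) : ∫ x, f x ∂P ≤ c :=
  calc ∫ x, f x ∂P = ∫ x, P[f | m] x ∂P := (integral_condExp hm).symm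
    _ ≤ ∫ _, c ∂P := integral_mono_ae integrable_condExp (integrable_const c) hf
    _ = c := by simp

lemma aestronglyMeasurable_of_condExp_ae_eq (hXY : P[X | m] =ᵐ[P] Y) :
    AEStronglyMeasurable[m] Y P :=
  stronglyMeasurable_condExp.aestronglyMeasurable.congr hXY

lemma memLp_of_condExp_ae_eq [CompleteSpace E] {p : ENNReal} (hp : 1 ≤ p) (hX : MemLp X p P)
    (hXY : P[X | m] =ᵐ[P] Y) : MemLp Y p P :=
  (hX.condExp hp).ae_eq hXY

end ConditionalExpectation

section SecondMoments

open scoped RealInnerProductSpace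

variable {E Ω : Type*} [NormedAddCommGroup E] {m mΩ : MeasurableSpace Ω} {P : Measure Ω}
  {X Y Z : Ω → E}

lemma integral_norm_sq_le_of_memLp_two (hX : MemLp X 2 P) (hY : MemLp Y 2 P) :
    ∫ x, ‖Y x‖ ^ 2 ∂P ≤ 2 * ∫ x, ‖X x‖ ^ 2 ∂P + 2 * ∫ x, ‖Y x - X x‖ ^ 2 ∂P := by
  have hX₂ := (hX.integrable_norm_pow two_ne_zero).const_mul 2
  have hYX₂ := ((hY.sub hX).integrable_norm_pow two_ne_zero).const_mul 2
  rw [← integral_const_mul, ← integral_const_mul]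
  exact (integral_mono (hY.integrable_norm_pow two_ne_zero) (hX₂.add hYX₂)
    fun x => norm_sq_le_two_mul_norm_sq_add_norm_sub_sq (X x) (Y x)).trans_eq
      (integral_add hX₂ hYX₂)

variable [InnerProductSpace ℝ E]

lemma integrable_inner_of_memLp_two (hX : MemLp X 2 P) (hY : MemLp Y 2 P) :
    Integrable (fun x => ⟪X x, Y x⟫) P :=
  memLp_one_iff_integrable.1 ((innerSL ℝ).memLp_of_bilin 1 hX hY)

lemma integral_inner_le_of_memLp_two (hX : MemLp X 2 P) (hY : MemLp Y 2 P) :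
    ∫ x, ⟪X x, Y x⟫ ∂P
      ≤ 3 / 2 * ∫ x, ‖X x‖ ^ 2 ∂P + 1 / 2 * ∫ x, ‖Y x - X x‖ ^ 2 ∂P := by
  have hX₂ := (hX.integrable_norm_pow two_ne_zero).const_mul (3 / 2)
  have hYX₂ := ((hY.sub hX).integrable_norm_pow two_ne_zero).const_mul (1 / 2)
  rw [← integral_const_mul, ← integral_const_mul]
  exact (integral_mono (integrable_inner_of_memLp_two hX hY) (hX₂.add hYX₂)
    fun x => inner_le_norm_sq_add_norm_sub_sq (X x) (Y x)).trans_eq (integral_add hX₂ hYX₂)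

variable [CompleteSpace E]

lemma integral_inner_eq_of_condExp_ae_eq [IsFiniteMeasure P] (hm : m ≤ mΩ)
    (hX : MemLp X 2 P) (hZ : MemLp Z 2 P) (hZm : AEStronglyMeasurable[m] Z P)
    (hXY : P[X | m] =ᵐ[P] Y) :
    ∫ x, ⟪Z x, X x⟫ ∂P = ∫ x, ⟪Z x, Y x⟫ ∂P := by
  have pull_out : P[fun x => ⟪Z x, X x⟫ | m] =ᵐ[P] fun x => ⟪Z x, P[X | m] x⟫ :=
    condExp_bilin_of_aestronglyMeasurable_left (innerSL ℝ) hZm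
      (integrable_inner_of_memLp_two hZ hX) (hX.integrable one_le_two)
  rw [← integral_condExp hm]
  refine integral_congr_ae ?_
  filter_upwards [pull_out, hXY] with x hx hxy
  rw [hx, hxy]

lemma integral_norm_sub_sq_eq_of_condExp_ae_eq [IsFiniteMeasure P] (hm : m ≤ mΩ)
    (hX : MemLp X 2 P) (hXY : P[X | m] =ᵐ[P] Y) :
    ∫ x, ‖X x - Y x‖ ^ 2 ∂P = ∫ x, ‖X x‖ ^ 2 ∂P - ∫ x, ‖Y x‖ ^ 2 ∂P := by
  have hY := memLp_of_condExp_ae_eq one_le_two hX hXY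
  have hX₂ := hX.integrable_norm_pow two_ne_zero
  have hY₂ := hY.integrable_norm_pow two_ne_zero
  have hYX := (integrable_inner_of_memLp_two hY hX).const_mul 2
  have cross : ∫ x, ⟪Y x, X x⟫ ∂P = ∫ x, ‖Y x‖ ^ 2 ∂P := by
    simpa only [real_inner_self_eq_norm_sq] using
      integral_inner_eq_of_condExp_ae_eq hm hX hY (aestronglyMeasurable_of_condExp_ae_eq hXY) hXY
  have hXYX : Integrable (fun x => ‖X x‖ ^ 2 - 2 * ⟪Y x, X x⟫) P := hX₂.sub hYX
  calc ∫ x, ‖X x - Y x‖ ^ 2 ∂P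
      = ∫ x, (‖X x‖ ^ 2 - 2 * ⟪Y x, X x⟫ + ‖Y x‖ ^ 2) ∂P := by
        simp only [norm_sub_sq_real, real_inner_comm]
    _ = ∫ x, ‖X x‖ ^ 2 ∂P - 2 * ∫ x, ⟪Y x, X x⟫ ∂P + ∫ x, ‖Y x‖ ^ 2 ∂P := by
        rw [integral_add hXYX hY₂, integral_sub hX₂ hYX, integral_const_mul]
    _ = ∫ x, ‖X x‖ ^ 2 ∂P - ∫ x, ‖Y x‖ ^ 2 ∂P := by rw [cross]; ring

lemma integral_norm_sq_le_of_condExp_norm_sub_sq_le [IsProbabilityMeasure P] (hm : m ≤ mΩ)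
    (hX : MemLp X 2 P) (hXY : P[X | m] =ᵐ[P] Y) {v : ℝ}
    (hv : ∀ᵐ x ∂P, P[fun y => ‖X y - Y y‖ ^ 2 | m] x ≤ v) :
    ∫ x, ‖X x‖ ^ 2 ∂P ≤ ∫ x, ‖Y x‖ ^ 2 ∂P + v := by
  have variance_le := integral_le_of_condExp_le hm hv
  rw [integral_norm_sub_sq_eq_of_condExp_ae_eq hm hX hXY] at variance_le
  linarith

end SecondMoments

section RandomObjective

open scoped Gradient NNReal RealInnerProductSpace

variable {E Ω : Type*} [NormedAddCommGroup E] [InnerProductSpace ℝ E] [CompleteSpace E]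
  {mΩ : MeasurableSpace Ω} {P : Measure Ω} {f : Ω → E → ℝ} {K : ℝ≥0} {X g : Ω → E}

lemma integral_gradient_step_ge (hf : ∀ x, Differentiable ℝ (f x))
    (hK : ∀ x, LipschitzWith K (∇ (f x))) (hg : MemLp g 2 P)
    (hG : MemLp (fun x => ∇ (f x) (X x)) 2 P) (hfX : Integrable (fun x => f x (X x)) P) {η : ℝ}
    (hfX' : Integrable (fun x => f x (X x - η • g x)) P) :
    ∫ x, f x (X x) ∂P - η * ∫ x, ⟪∇ (f x) (X x), g x⟫ ∂P - K * η ^ 2 / 2 * ∫ x, ‖g x‖ ^ 2 ∂P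
      ≤ ∫ x, f x (X x - η • g x) ∂P := by
  have hGg := (integrable_inner_of_memLp_two hG hg).const_mul η
  have hg₂ := (hg.integrable_norm_pow two_ne_zero).const_mul (K * η ^ 2 / 2)
  have hlin : Integrable (fun x => f x (X x) - η * ⟪∇ (f x) (X x), g x⟫) P := hfX.sub hGg
  rw [← integral_const_mul, ← integral_const_mul, ← integral_sub hfX hGg,
    ← integral_sub hlin hg₂]
  refine integral_mono (hlin.sub hg₂) hfX' fun x => ?_
  have bound := quadratic_lower_bound_of_lipschitzWith_gradient (hf x) (hK x) (X x) (-(η • g x))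
  rw [inner_neg_right, real_inner_smul_right, norm_neg, norm_smul, mul_pow, Real.norm_eq_abs,
    sq_abs, ← sub_eq_add_neg (X x)] at bound
  linarith

lemma integral_norm_gradient_add_smul_sub_sq_le (hK : ∀ x, LipschitzWith K (∇ (f x)))
    (hg : MemLp g 2 P) (ρ : ℝ) :
    ∫ x, ‖∇ (f x) (X x + ρ • g x) - ∇ (f x) (X x)‖ ^ 2 ∂P
      ≤ K ^ 2 * ρ ^ 2 * ∫ x, ‖g x‖ ^ 2 ∂P := by
  rw [← integral_const_mul]
  refine integral_mono_of_nonneg (.of_forall fun x => by positivity)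
    ((hg.integrable_norm_pow two_ne_zero).const_mul _) (.of_forall fun x => ?_)
  calc ‖∇ (f x) (X x + ρ • g x) - ∇ (f x) (X x)‖ ^ 2
      ≤ (K * ‖X x + ρ • g x - X x‖) ^ 2 := by gcongr; exact (hK x).norm_sub_le _ _
    _ = K ^ 2 * ρ ^ 2 * ‖g x‖ ^ 2 := by
        rw [add_sub_cancel_left, norm_smul, mul_pow, mul_pow, Real.norm_eq_abs, sq_abs, mul_assoc]

/-- Here `f x` stands for `L(·, ω_t x)`, `X` for `θ_t`, `m` for `F_t`, `m'` for the σ-algebra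
generated by `F_t` and `g_t`, and `v` for `σ² / M`. -/
theorem sharpDRO_theta_update_lower_bound_general [IsProbabilityMeasure P]
    {m m' : MeasurableSpace Ω} (hmm' : m ≤ m') (hm' : m' ≤ mΩ)
    (hf : ∀ x, Differentiable ℝ (f x)) (hK : ∀ x, LipschitzWith K (∇ (f x)))
    {g' : Ω → E} {ρ η v : ℝ} (hη : 0 ≤ η) (hg : MemLp g 2 P) (hg' : MemLp g' 2 P)
    (hg_mean : P[g | m] =ᵐ[P] fun x => ∇ (f x) (X x))
    (hg_var : ∀ᵐ x ∂P, P[fun y => ‖g y - ∇ (f y) (X y)‖ ^ 2 | m] x ≤ v)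
    (hg'_mean : P[g' | m'] =ᵐ[P] fun x => ∇ (f x) (X x + ρ • g x))
    (hg'_var : ∀ᵐ x ∂P, P[fun y => ‖g' y - ∇ (f y) (X y + ρ • g y)‖ ^ 2 | m'] x ≤ v)
    (hfX : Integrable (fun x => f x (X x)) P)
    (hfX' : Integrable (fun x => f x (X x - η • g' x)) P) :
    ∫ x, f x (X x) ∂P
        - (3 * η / 2 + K ^ 2 * ρ ^ 2 * η / 2 + K * η ^ 2 * (ρ ^ 2 * K ^ 2 + 1))
            * ∫ x, ‖∇ (f x) (X x)‖ ^ 2 ∂P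
        - (K ^ 2 * ρ ^ 2 * η / 2 + K * η ^ 2 / 2 * (2 * ρ ^ 2 * K ^ 2 + 1)) * v
      ≤ ∫ x, f x (X x - η • g' x) ∂P := by
  let G : Ω → E := fun x => ∇ (f x) (X x)
  let H : Ω → E := fun x => ∇ (f x) (X x + ρ • g x)
  let D : ℝ := K ^ 2 * ρ ^ 2 * (∫ x, ‖G x‖ ^ 2 ∂P + v)
  have hG : MemLp G 2 P := memLp_of_condExp_ae_eq one_le_two hg hg_mean
  have hH : MemLp H 2 P := memLp_of_condExp_ae_eq one_le_two hg' hg'_mean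
  have hHG : ∫ x, ‖H x - G x‖ ^ 2 ∂P ≤ D :=
    (integral_norm_gradient_add_smul_sub_sq_le hK hg ρ).trans <| mul_le_mul_of_nonneg_left
      (integral_norm_sq_le_of_condExp_norm_sub_sq_le (hmm'.trans hm') hg hg_mean hg_var)
      (by positivity)
  have inner_le : ∫ x, ⟪G x, g' x⟫ ∂P ≤ 3 / 2 * ∫ x, ‖G x‖ ^ 2 ∂P + 1 / 2 * D := by
    have hGm' := (aestronglyMeasurable_of_condExp_ae_eq hg_mean).mono hmm'
    rw [integral_inner_eq_of_condExp_ae_eq hm' hg' hG hGm' hg'_mean]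
    linarith [integral_inner_le_of_memLp_two hG hH]
  have norm_sq_le : ∫ x, ‖g' x‖ ^ 2 ∂P ≤ 2 * ∫ x, ‖G x‖ ^ 2 ∂P + 2 * D + v := by
    linarith [integral_norm_sq_le_of_condExp_norm_sub_sq_le hm' hg' hg'_mean hg'_var,
      integral_norm_sq_le_of_memLp_two hG hH]
  calc _ = ∫ x, f x (X x) ∂P - η * (3 / 2 * ∫ x, ‖G x‖ ^ 2 ∂P + 1 / 2 * D)
          - K * η ^ 2 / 2 * (2 * ∫ x, ‖G x‖ ^ 2 ∂P + 2 * D + v) := by ring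
    _ ≤ ∫ x, f x (X x) ∂P - η * ∫ x, ⟪G x, g' x⟫ ∂P
          - K * η ^ 2 / 2 * ∫ x, ‖g' x‖ ^ 2 ∂P := by gcongr
    _ ≤ ∫ x, f x (X x - η • g' x) ∂P := integral_gradient_step_ge hf hK hg' hG hfX hfX'

end RandomObjective

theorem sharpDRO_theta_update_lower_bound {d n : ℕ} {Ω : Type} [mΩ : MeasurableSpace Ω]
    (P : Measure Ω) [IsProbabilityMeasure P]
    (L : EuclideanSpace ℝ (Fin d) → EuclideanSpace ℝ (Fin n) → ℝ)
    (l μpl σ ρ : ℝ) (M : ℕ)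
    (hl : 0 < l) (hμpl : 0 < μpl) (hσ : 0 < σ) (hρ : 0 < ρ) (hM : 1 ≤ M)
    (hdiff : Differentiable ℝ (Function.uncurry L))
    (hLip : ∀ θ₁ ω₁ θ₂ ω₂,
      ‖gradTheta L θ₁ ω₁ - gradTheta L θ₂ ω₂‖ ≤ l * Real.sqrt (‖θ₁ - θ₂‖ ^ 2 + ‖ω₁ - ω₂‖ ^ 2) ∧
      ‖gradOmega L θ₁ ω₁ - gradOmega L θ₂ ω₂‖ ≤ l * Real.sqrt (‖θ₁ - θ₂‖ ^ 2 + ‖ω₁ - ω₂‖ ^ 2))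
    (Lstar : EuclideanSpace ℝ (Fin d) → ℝ)
    (hLstar : ∀ θ', IsGreatest (Set.range (L θ')) (Lstar θ'))
    (hPL : ∀ θ' ω', 2 * μpl * (Lstar θ' - L θ' ω') ≤ ‖gradOmega L θ' ω'‖ ^ 2)
    (F : ℕ → MeasurableSpace Ω) (hF : ∀ t, F t ≤ mΩ)
    (θ : ℕ → Ω → EuclideanSpace ℝ (Fin d)) (ω : ℕ → Ω → EuclideanSpace ℝ (Fin n))
    (g g' : ℕ → Ω → EuclideanSpace ℝ (Fin d))
    (hθmeas : ∀ t, Measurable[F t] (θ t)) (hωmeas : ∀ t, Measurable[F t] (ω t))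
    (hgmeas : ∀ t, Measurable (g t)) (hg'meas : ∀ t, Measurable (g' t))
    (hg_mean : ∀ t, P[g t|F t] =ᵐ[P] fun x => gradTheta L (θ t x) (ω t x))
    (hg_var : ∀ t, ∀ᵐ x ∂P,
      (P[(fun y => ‖g t y - gradTheta L (θ t y) (ω t y)‖ ^ 2)|F t]) x ≤ σ ^ 2 / (M : ℝ))
    (hg'_mean : ∀ t, P[g' t|F t ⊔ MeasurableSpace.comap (g t) inferInstance] =ᵐ[P]
      fun x => gradTheta L (θ t x + ρ • g t x) (ω t x))
    (hg'_var : ∀ t, ∀ᵐ x ∂P,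
      (P[(fun y => ‖g' t y - gradTheta L (θ t y + ρ • g t y) (ω t y)‖ ^ 2)|
        F t ⊔ MeasurableSpace.comap (g t) inferInstance]) x ≤ σ ^ 2 / (M : ℝ))
    (hint_g2 : ∀ t, Integrable (fun x => ‖g t x‖ ^ 2) P)
    (hint_g'2 : ∀ t, Integrable (fun x => ‖g' t x‖ ^ 2) P)
    (hint_gradθ2 : ∀ t, Integrable (fun x => ‖gradTheta L (θ t x) (ω t x)‖ ^ 2) P)
    (hint_inner : ∀ t,
      Integrable (fun x => (inner ℝ (g' t x) (gradTheta L (θ t x) (ω t x)) : ℝ)) P)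
    (ηθ : ℝ) (hηθ : 0 < ηθ)
    (hθupd : ∀ t x, θ (t + 1) x = θ t x - ηθ • g' t x)
    (hint_L : ∀ s t, Integrable (fun x => L (θ s x) (ω t x)) P) :
    ∀ t, ∫ x, L (θ (t + 1) x) (ω t x) ∂P
      ≥ ∫ x, L (θ t x) (ω t x) ∂P
        - (3 * ηθ / 2 + l ^ 2 * ρ ^ 2 * ηθ / 2 + l * ηθ ^ 2 * (2 * ρ ^ 2 * l ^ 2 + ρ * l + 1))
            * ∫ x, ‖gradTheta L (θ t x) (ω t x)‖ ^ 2 ∂P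
        - (l ^ 2 * ρ ^ 2 * ηθ / 2 + l * ηθ ^ 2 / 2 * (5 * ρ ^ 2 * l ^ 2 + 2)) * σ ^ 2 / M := by
  intro t
  lift l to NNReal using hl.le
  have smooth (w) : Differentiable ℝ (fun θ' => L θ' w) :=
    hdiff.comp (differentiable_id.prodMk (differentiable_const w))
  have lipschitz (w) : LipschitzWith l (gradient fun θ' => L θ' w) :=
    .of_dist_le_mul fun a b => by
      simpa [gradTheta, dist_eq_norm, Real.sqrt_sq (norm_nonneg _)] using (hLip a w b w).1
  have hg := (memLp_two_iff_integrable_sq_norm (hgmeas t).aestronglyMeasurable).2 (hint_g2 t)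
  have hg' := (memLp_two_iff_integrable_sq_norm (hg'meas t).aestronglyMeasurable).2 (hint_g'2 t)
  have bound := sharpDRO_theta_update_lower_bound_general le_sup_left
    (sup_le (hF t) (hgmeas t).comap_le) (fun x => smooth (ω t x)) (fun x => lipschitz (ω t x))
    hηθ.le hg hg' (hg_mean t) (hg_var t) (hg'_mean t) (hg'_var t) (hint_L t t)
    (by simpa only [hθupd] using hint_L (t + 1) t)
  simp only [hθupd, mul_div_assoc _ (σ ^ 2)]
  refine bound.trans' ?_
  gcongr ?_ - (_ + _ + _ * ?_) * _ - (_ + _ * ?_) * _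
  · nlinarith [mul_pos hρ hl]
  · nlinarith [mul_pos hρ hl]
end

section
/- Squared Bayes-risk gap of a single in-modal classifier bounded by conditional mutual information (step in the Out-of-Modal proof): Let h* be pointwise Bayes optimal given (X_1, X_2, X^O) and h_1* pointwise Bayes optimal given X_1, both assumed to exist as measurable functions. Then (L(h_1*) − L(h*))² ≤ I((X_2, X^O); Y | X_1). -/
open MeasureTheory ProbabilityTheory
open scoped ENNReal

-- Kullback–Leibler divergence between two measures: `∫ log(dp/dq) dp` when `p ≪ q` and the
-- log-likelihood ratio is integrable, and `∞` otherwise.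
open Classical in
noncomputable def klDiv {α : Type*} [MeasurableSpace α] (p q : Measure α) : ℝ≥0∞ :=
  if p ≪ q ∧ Integrable (llr p q) p then ENNReal.ofReal (∫ x, llr p q x ∂p) else ⊤

/-- Conditional mutual information `I(U; Y | W)`: the expectation over `(W, U)` of the
Kullback–Leibler divergence `KL(P_{Y | W, U} ‖ P_{Y | W})` between the conditional
distributions of `Y`. -/
noncomputable def condMutualInfo {Ωs 𝒴 β γ : Type*} [MeasurableSpace Ωs] [MeasurableSpace 𝒴]
    [StandardBorelSpace 𝒴] [Nonempty 𝒴] [MeasurableSpace β] [MeasurableSpace γ]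
    (P : Measure Ωs) [IsFiniteMeasure P] (U : Ωs → β) (Y : Ωs → 𝒴) (W : Ωs → γ) : ℝ≥0∞ :=
  ∫⁻ x, klDiv (condDistrib Y (fun ω => (W ω, U ω)) P (W x, U x))
      (condDistrib Y W P (W x)) ∂P

/-- A classifier `h` is (pointwise) Bayes optimal given `W` if for almost every value `w` of
`W`, `h w` minimizes the conditional expected loss `E[ℓ(·, Y) | W = w]`. -/
def BayesOptimal {Ωs 𝒴 γ Yhat : Type*} [MeasurableSpace Ωs] [MeasurableSpace 𝒴]
    [StandardBorelSpace 𝒴] [Nonempty 𝒴] [MeasurableSpace γ]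
    (P : Measure Ωs) [IsFiniteMeasure P] (ℓ : Yhat → 𝒴 → ℝ)
    (Y : Ωs → 𝒴) (W : Ωs → γ) (h : γ → Yhat) : Prop :=
  ∀ᵐ w ∂(P.map W), ∀ yhat, ∫ y, ℓ (h w) y ∂(condDistrib Y W P w)
      ≤ ∫ y, ℓ yhat y ∂(condDistrib Y W P w)

/-- The risk `L(h) := E[ℓ(h(W), Y)]` of a classifier `h` based on the information `W`. -/
noncomputable def risk {Ωs 𝒴 γ Yhat : Type*} [MeasurableSpace Ωs]
    (P : Measure Ωs) (ℓ : Yhat → 𝒴 → ℝ) (Y : Ωs → 𝒴) (W : Ωs → γ) (h : γ → Yhat) : ℝ :=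
  ∫ x, ℓ (h (W x)) (Y x) ∂P

/-!
Let `V = (W, U)`, let `h` be Bayes optimal given `V` and `h₀` Bayes optimal given `W`. Both risks
are averages of conditional risks. Replacing `h₀` by the action of `h` can only increase the
conditional risk given `W`, so the risk gap is at most the average of the difference between the
expected losses of one and the same action under `P_{Y | W}` and under `P_{Y | V}`. Jensen's
inequality moves the square inside the average, and Pinsker's inequality, in the form
`2 (∫ f dp - ∫ f dq)² ≤ (b - a)² KL(p ‖ q)` for `a ≤ f ≤ b`, bounds each squared difference.
Pinsker's inequality itself comes from the Donsker–Varadhan inequality (Gibbs' inequality for an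
exponential tilting of `q`) and Hoeffding's lemma.
-/

section Pinsker

variable {α : Type*} [MeasurableSpace α] {p q : Measure α} [IsProbabilityMeasure p]
  [IsProbabilityMeasure q] {f : α → ℝ}

lemma integral_llr_nonneg (hpq : p ≪ q) (h_int : Integrable (llr p q) p) :
    0 ≤ ∫ x, llr p q x ∂p := by
  simpa using InformationTheory.integral_llr_add_sub_measure_univ_nonneg hpq h_int

lemma integral_sub_log_integral_exp_le_integral_llr (hpq : p ≪ q)
    (h_int : Integrable (llr p q) p) (hfp : Integrable f p)
    (hfq : Integrable (fun x => Real.exp (f x)) q) :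
    ∫ x, f x ∂p - Real.log (∫ x, Real.exp (f x) ∂q) ≤ ∫ x, llr p q x ∂p := by
  have := isProbabilityMeasure_tilted hfq
  have h_nonneg : 0 ≤ ∫ x, llr p (q.tilted f) x ∂p :=
    integral_llr_nonneg (hpq.trans (absolutelyContinuous_tilted hfq))
      (integrable_llr_tilted_right hpq hfp h_int hfq)
  rw [integral_llr_tilted_right hpq hfp hfq h_int] at h_nonneg
  linarith

lemma sq_integral_le_mul_integral_llr_of_hasSubgaussianMGF {c : NNReal} (hpq : p ≪ q)
    (h_int : Integrable (llr p q) p) (hfp : Integrable f p) (hfq : HasSubgaussianMGF f c q) :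
    (∫ x, f x ∂p) ^ 2 ≤ 2 * c * ∫ x, llr p q x ∂p := by
  have h_quadratic (t : ℝ) :
      0 ≤ c / 2 * (t * t) + -(∫ x, f x ∂p) * t + ∫ x, llr p q x ∂p := by
    have h_dual := integral_sub_log_integral_exp_le_integral_llr hpq h_int (hfp.const_mul t)
      (hfq.integrable_exp_mul t)
    have h_cgf : Real.log (∫ x, Real.exp (t * f x) ∂q) ≤ c * t ^ 2 / 2 := hfq.cgf_le t
    rw [integral_const_mul] at h_dual
    linarith
  have h_discrim := discrim_le_zero h_quadratic
  rw [discrim] at h_discrim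
  linarith

lemma ofReal_two_mul_sq_integral_sub_le_klDiv {a b : ℝ} (hf : Measurable f)
    (hfab : ∀ x, f x ∈ Set.Icc a b) :
    ENNReal.ofReal (2 * (∫ x, f x ∂q - ∫ x, f x ∂p) ^ 2)
      ≤ ENNReal.ofReal ((b - a) ^ 2) * klDiv p q := by
  rcases eq_or_ne a b with rfl | hab
  · obtain rfl : f = fun _ => a := funext fun x => by simpa using hfab x
    simp
  unfold klDiv
  split_ifs with h
  · obtain ⟨hpq, h_int⟩ := h
    have hfp : Integrable f p := .of_mem_Icc a b hf.aemeasurable (.of_forall hfab)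
    have h_sq : (∫ x, (f x - ∫ y, f y ∂q) ∂p) ^ 2 ≤ _ :=
      sq_integral_le_mul_integral_llr_of_hasSubgaussianMGF hpq h_int (hfp.sub (integrable_const _))
        (hasSubgaussianMGF_of_mem_Icc (μ := q) hf.aemeasurable (.of_forall hfab))
    rw [integral_sub hfp (integrable_const _), integral_const, probReal_univ, one_smul] at h_sq
    push_cast at h_sq
    rw [div_pow, Real.norm_eq_abs, sq_abs] at h_sq
    rw [← ENNReal.ofReal_mul (sq_nonneg _)]
    exact ENNReal.ofReal_le_ofReal (by linarith)
  · have h_pos : 0 < (b - a) ^ 2 := sq_pos_of_ne_zero (sub_ne_zero.2 hab.symm)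
    rw [ENNReal.mul_top (ENNReal.ofReal_pos.2 h_pos).ne']
    exact le_top

end Pinsker

lemma ofReal_sq_integral_le_lintegral_ofReal_sq {α : Type*} [MeasurableSpace α] {p : Measure α}
    [IsProbabilityMeasure p] {f : α → ℝ} (hf : MemLp f 2 p) :
    ENNReal.ofReal ((∫ x, f x ∂p) ^ 2) ≤ ∫⁻ x, ENNReal.ofReal (f x ^ 2) ∂p := by
  rw [← ofReal_integral_eq_lintegral_ofReal hf.integrable_sq (.of_forall fun x => sq_nonneg _)]
  exact ENNReal.ofReal_le_ofReal (sub_nonneg.1 (variance_eq_sub hf ▸ variance_nonneg f p))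

lemma integral_comp_prodMk_eq_integral_condDistrib {Ωs 𝒴 γ E : Type*} [MeasurableSpace Ωs]
    [MeasurableSpace 𝒴] [StandardBorelSpace 𝒴] [Nonempty 𝒴] [MeasurableSpace γ]
    [NormedAddCommGroup E] [NormedSpace ℝ E] {P : Measure Ωs} [IsFiniteMeasure P]
    {W : Ωs → γ} {Y : Ωs → 𝒴} {f : γ × 𝒴 → E} (hW : AEMeasurable W P) (hY : AEMeasurable Y P)
    (hf : Integrable f (P.map fun x => (W x, Y x))) :
    ∫ x, f (W x, Y x) ∂P = ∫ x, ∫ y, f (W x, y) ∂condDistrib Y W P (W x) ∂P := by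
  rw [← integral_map (hW.prodMk hY) hf.aestronglyMeasurable,
    ← integral_map (f := fun w => ∫ y, f (w, y) ∂condDistrib Y W P w) hW
    (hf.aestronglyMeasurable.integral_condDistrib_map hY)]
  rw [← compProd_map_condDistrib hY] at hf ⊢
  exact Measure.integral_compProd hf

section Loss

variable {Ωs 𝒴 γ Yhat : Type*} [MeasurableSpace Ωs] [MeasurableSpace 𝒴] [MeasurableSpace Yhat]
  {P : Measure Ωs} {ℓ : Yhat → 𝒴 → ℝ} {Y : Ωs → 𝒴}

lemma integrable_loss [IsFiniteMeasure P] {a b : ℝ} (hℓ : Measurable (Function.uncurry ℓ))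
    (hℓab : ∀ yhat y, ℓ yhat y ∈ Set.Icc a b) (hY : AEMeasurable Y P) {g : Ωs → Yhat}
    (hg : AEMeasurable g P) : Integrable (fun x => ℓ (g x) (Y x)) P :=
  .of_mem_Icc a b (hℓ.comp_aemeasurable (hg.prodMk hY)) (.of_forall fun _ => hℓab _ _)

lemma integrable_map_loss [MeasurableSpace γ] {W : Ωs → γ} {h : γ → Yhat}
    (hℓ : Measurable (Function.uncurry ℓ)) (hW : AEMeasurable W P) (hY : AEMeasurable Y P)
    (hh : Measurable h) (h_int : Integrable (fun x => ℓ (h (W x)) (Y x)) P) :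
    Integrable (fun z : γ × 𝒴 => ℓ (h z.1) z.2) (P.map fun x => (W x, Y x)) := by
  have h_loss : Measurable fun z : γ × 𝒴 => ℓ (h z.1) z.2 :=
    hℓ.comp ((hh.comp measurable_fst).prodMk measurable_snd)
  exact (integrable_map_measure h_loss.aestronglyMeasurable (hW.prodMk hY)).2 h_int

end Loss

section CondRisk

variable {Ωs 𝒴 γ Yhat : Type*} [MeasurableSpace Ωs] [MeasurableSpace 𝒴] [StandardBorelSpace 𝒴]
  [Nonempty 𝒴] [MeasurableSpace γ] {P : Measure Ωs} {ℓ : Yhat → 𝒴 → ℝ} {Y : Ωs → 𝒴} {W : Ωs → γ}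

/-- The conditional risk `E[ℓ(yhat, Y) | W = w]` of the prediction `yhat`, computed with the regular
conditional distribution of `Y` given `W`. Since `yhat` does not have to be a function of `w`, one
can evaluate a classifier that uses more information than `W` against `P_{Y | W}`. -/
noncomputable def condRisk (P : Measure Ωs) [IsFiniteMeasure P] (ℓ : Yhat → 𝒴 → ℝ) (Y : Ωs → 𝒴)
    (W : Ωs → γ) (w : γ) (yhat : Yhat) : ℝ :=
  ∫ y, ℓ yhat y ∂condDistrib Y W P w

lemma condRisk_mem_Icc [IsFiniteMeasure P] {a b : ℝ} {yhat : Yhat} (hℓ : Measurable (ℓ yhat))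
    (hℓab : ∀ y, ℓ yhat y ∈ Set.Icc a b) (w : γ) : condRisk P ℓ Y W w yhat ∈ Set.Icc a b :=
  (convex_Icc a b).integral_mem isClosed_Icc (.of_forall hℓab)
    (.of_mem_Icc a b hℓ.aemeasurable (.of_forall hℓab))

lemma two_mul_lintegral_sq_condRisk_sub_le_condMutualInfo [IsFiniteMeasure P] {β : Type*}
    [MeasurableSpace β] {U : Ωs → β} {a b : ℝ}
    (hℓ : ∀ yhat, Measurable (ℓ yhat)) (hℓab : ∀ yhat y, ℓ yhat y ∈ Set.Icc a b) (g : Ωs → Yhat) :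
    2 * ∫⁻ x, ENNReal.ofReal ((condRisk P ℓ Y W (W x) (g x)
        - condRisk P ℓ Y (fun x => (W x, U x)) (W x, U x) (g x)) ^ 2) ∂P
      ≤ ENNReal.ofReal ((b - a) ^ 2) * condMutualInfo P U Y W := by
  rw [condMutualInfo, ← lintegral_const_mul' _ _ ENNReal.ofNat_ne_top,
    ← lintegral_const_mul' _ _ ENNReal.ofReal_ne_top]
  refine lintegral_mono fun x => ?_
  simpa [ENNReal.ofReal_mul] using! ofReal_two_mul_sq_integral_sub_le_klDiv
    (p := condDistrib Y (fun ω => (W ω, U ω)) P (W x, U x)) (q := condDistrib Y W P (W x))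
    (hℓ (g x)) (hℓab (g x))

variable [MeasurableSpace Yhat]

lemma measurable_uncurry_condRisk [IsFiniteMeasure P] (hℓ : Measurable (Function.uncurry ℓ)) :
    Measurable (Function.uncurry (condRisk P ℓ Y W)) := by
  have hℓ' : Measurable fun z : (γ × Yhat) × 𝒴 => ℓ z.1.2 z.2 :=
    hℓ.comp ((measurable_snd.comp measurable_fst).prodMk measurable_snd)
  exact (hℓ'.stronglyMeasurable.integral_kernel_prod_right'
    (κ := (condDistrib Y W P).comap Prod.fst measurable_fst)).measurable

lemma memLp_condRisk [IsFiniteMeasure P] {a b : ℝ} (hℓ : Measurable (Function.uncurry ℓ))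
    (hℓab : ∀ yhat y, ℓ yhat y ∈ Set.Icc a b) (hW : AEMeasurable W P) {g : Ωs → Yhat}
    (hg : AEMeasurable g P) (r : ℝ≥0∞) :
    MemLp (fun x => condRisk P ℓ Y W (W x) (g x)) r P :=
  memLp_of_bounded (.of_forall fun _ => condRisk_mem_Icc hℓ.of_uncurry_left (hℓab _) _)
    ((measurable_uncurry_condRisk hℓ).comp_aemeasurable (hW.prodMk hg)).aestronglyMeasurable r

variable [IsFiniteMeasure P] {h : γ → Yhat}

lemma risk_eq_integral_condRisk (hℓ : Measurable (Function.uncurry ℓ)) (hW : AEMeasurable W P)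
    (hY : AEMeasurable Y P) (hh : Measurable h)
    (h_int : Integrable (fun x => ℓ (h (W x)) (Y x)) P) :
    risk P ℓ Y W h = ∫ x, condRisk P ℓ Y W (W x) (h (W x)) ∂P :=
  integral_comp_prodMk_eq_integral_condDistrib hW hY (integrable_map_loss hℓ hW hY hh h_int)

lemma integrable_condRisk (hℓ : Measurable (Function.uncurry ℓ)) (hW : AEMeasurable W P)
    (hY : AEMeasurable Y P) (hh : Measurable h)
    (h_int : Integrable (fun x => ℓ (h (W x)) (Y x)) P) :
    Integrable (fun x => condRisk P ℓ Y W (W x) (h (W x))) P :=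
  (integrable_map_loss hℓ hW hY hh h_int).integral_condDistrib hW hY

lemma BayesOptimal.risk_le_integral_condRisk (h_opt : BayesOptimal P ℓ Y W h)
    (hℓ : Measurable (Function.uncurry ℓ)) (hW : AEMeasurable W P) (hY : AEMeasurable Y P)
    (hh : Measurable h) (h_int : Integrable (fun x => ℓ (h (W x)) (Y x)) P) {g : Ωs → Yhat}
    (hg_int : Integrable (fun x => condRisk P ℓ Y W (W x) (g x)) P) :
    risk P ℓ Y W h ≤ ∫ x, condRisk P ℓ Y W (W x) (g x) ∂P := by
  rw [risk_eq_integral_condRisk hℓ hW hY hh h_int]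
  refine integral_mono_ae (integrable_condRisk hℓ hW hY hh h_int) hg_int ?_
  filter_upwards [ae_of_ae_map hW h_opt] with x hx using hx (g x)

lemma BayesOptimal.risk_le (h_opt : BayesOptimal P ℓ Y W h)
    (hℓ : Measurable (Function.uncurry ℓ)) (hW : AEMeasurable W P) (hY : AEMeasurable Y P)
    (hh : Measurable h) (h_int : Integrable (fun x => ℓ (h (W x)) (Y x)) P) {h' : γ → Yhat}
    (hh' : Measurable h') (h_int' : Integrable (fun x => ℓ (h' (W x)) (Y x)) P) :
    risk P ℓ Y W h ≤ risk P ℓ Y W h' := by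
  rw [risk_eq_integral_condRisk hℓ hW hY hh' h_int']
  exact h_opt.risk_le_integral_condRisk hℓ hW hY hh h_int
    (integrable_condRisk hℓ hW hY hh' h_int')

lemma BayesOptimal.risk_sub_risk_le (h_opt : BayesOptimal P ℓ Y W h)
    (hℓ : Measurable (Function.uncurry ℓ)) (hW : AEMeasurable W P) (hY : AEMeasurable Y P)
    (hh : Measurable h) (h_int : Integrable (fun x => ℓ (h (W x)) (Y x)) P)
    {δ : Type*} [MeasurableSpace δ] {V : Ωs → δ} {k : δ → Yhat} (hV : AEMeasurable V P)
    (hk : Measurable k) (hk_int : Integrable (fun x => ℓ (k (V x)) (Y x)) P)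
    (hk_condRisk : Integrable (fun x => condRisk P ℓ Y W (W x) (k (V x))) P) :
    risk P ℓ Y W h - risk P ℓ Y V k
      ≤ ∫ x, (condRisk P ℓ Y W (W x) (k (V x)) - condRisk P ℓ Y V (V x) (k (V x))) ∂P := by
  rw [integral_sub hk_condRisk (integrable_condRisk hℓ hV hY hk hk_int),
    ← risk_eq_integral_condRisk hℓ hV hY hk hk_int]
  exact sub_le_sub_right (h_opt.risk_le_integral_condRisk hℓ hW hY hh h_int hk_condRisk) _

end CondRisk

theorem oom_single_modal_squared_gap_le_info_general
    {Ωs 𝒴 Yhat γ β : Type*} [MeasurableSpace Ωs] [MeasurableSpace 𝒴] [StandardBorelSpace 𝒴]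
    [Nonempty 𝒴] [MeasurableSpace Yhat] [MeasurableSpace γ] [MeasurableSpace β]
    (P : Measure Ωs) [IsProbabilityMeasure P]
    (ℓ : Yhat → 𝒴 → ℝ) (hℓ : Measurable (Function.uncurry ℓ)) {a b : ℝ}
    (hℓab : ∀ yhat y, ℓ yhat y ∈ Set.Icc a b)
    (W : Ωs → γ) (U : Ωs → β) (Y : Ωs → 𝒴)
    (hW : AEMeasurable W P) (hU : AEMeasurable U P) (hY : AEMeasurable Y P)
    (h : γ × β → Yhat) (h₀ : γ → Yhat) (hh : Measurable h) (hh₀ : Measurable h₀)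
    (h_opt : BayesOptimal P ℓ Y (fun x => (W x, U x)) h) (h₀_opt : BayesOptimal P ℓ Y W h₀) :
    ENNReal.ofReal (2 * (risk P ℓ Y W h₀ - risk P ℓ Y (fun x => (W x, U x)) h) ^ 2)
      ≤ ENNReal.ofReal ((b - a) ^ 2) * condMutualInfo P U Y W := by
  have hV := hW.prodMk hU
  have hg := hh.comp_aemeasurable hV
  have h_int := integrable_loss hℓ hℓab hY hg
  have h₀_int := integrable_loss hℓ hℓab hY (hh₀.comp_aemeasurable hW)
  have h_condRisk : MemLp (fun x => condRisk P ℓ Y W (W x) (h (W x, U x))) 2 P :=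
    memLp_condRisk hℓ hℓab hW hg 2
  have gap_nonneg : 0 ≤ risk P ℓ Y W h₀ - risk P ℓ Y (fun x => (W x, U x)) h :=
    sub_nonneg.2 (h_opt.risk_le hℓ hV hY hh h_int (hh₀.comp measurable_fst) h₀_int)
  have gap_le := h₀_opt.risk_sub_risk_le hℓ hW hY hh₀ h₀_int hV hh h_int
    (h_condRisk.integrable one_le_two)
  rw [ENNReal.ofReal_mul zero_le_two, ENNReal.ofReal_ofNat]
  calc 2 * ENNReal.ofReal ((risk P ℓ Y W h₀ - risk P ℓ Y (fun x => (W x, U x)) h) ^ 2)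
    _ ≤ 2 * ENNReal.ofReal ((∫ x, (condRisk P ℓ Y W (W x) (h (W x, U x))
          - condRisk P ℓ Y (fun x => (W x, U x)) (W x, U x) (h (W x, U x))) ∂P) ^ 2) := by
      gcongr
    _ ≤ 2 * ∫⁻ x, ENNReal.ofReal ((condRisk P ℓ Y W (W x) (h (W x, U x))
          - condRisk P ℓ Y (fun x => (W x, U x)) (W x, U x) (h (W x, U x))) ^ 2) ∂P := by
      gcongr
      exact ofReal_sq_integral_le_lintegral_ofReal_sq
        (h_condRisk.sub (memLp_condRisk hℓ hℓab hV hg 2))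
    _ ≤ ENNReal.ofReal ((b - a) ^ 2) * condMutualInfo P U Y W :=
      two_mul_lintegral_sq_condRisk_sub_le_condMutualInfo (fun _ => hℓ.of_uncurry_left) hℓab _

/-- **Squared Bayes-risk gap of a single in-modal classifier bounded by conditional mutual
information (step in the Out-of-Modal proof).** -/
theorem oom_single_modal_squared_gap_le_info
    {Ωs 𝒴 Yhat β₁ β₂ βO : Type*} [MeasurableSpace Ωs] [MeasurableSpace 𝒴]
    [StandardBorelSpace 𝒴] [Nonempty 𝒴] [MeasurableSpace Yhat]
    [MeasurableSpace β₁] [MeasurableSpace β₂] [MeasurableSpace βO]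
    (P : Measure Ωs) [IsProbabilityMeasure P]
    (ℓ : Yhat → 𝒴 → ℝ) (hℓmeas : Measurable (Function.uncurry ℓ))
    (hℓ01 : ∀ yhat y, ℓ yhat y ∈ Set.Icc (0 : ℝ) 1)
    (X₁ : Ωs → β₁) (X₂ : Ωs → β₂) (XO : Ωs → βO) (Y : Ωs → 𝒴)
    (hX₁ : Measurable X₁) (hX₂ : Measurable X₂) (hXO : Measurable XO) (hYm : Measurable Y)
    (hstar : β₁ × β₂ × βO → Yhat) (h1 : β₁ → Yhat)
    (hstarm : Measurable hstar) (h1m : Measurable h1)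
    (hBstar : BayesOptimal P ℓ Y (fun x => (X₁ x, X₂ x, XO x)) hstar)
    (hB1 : BayesOptimal P ℓ Y X₁ h1) :
    ENNReal.ofReal ((risk P ℓ Y X₁ h1
          - risk P ℓ Y (fun x => (X₁ x, X₂ x, XO x)) hstar) ^ 2)
      ≤ condMutualInfo P (fun x => (X₂ x, XO x)) Y X₁ := by
  refine (ENNReal.ofReal_le_ofReal (le_mul_of_one_le_left (sq_nonneg _) one_le_two)).trans ?_
  simpa using oom_single_modal_squared_gap_le_info_general P ℓ hℓmeas hℓ01 X₁
    (fun x => (X₂ x, XO x)) Y hX₁.aemeasurable (hX₂.prodMk hXO).aemeasurable hYm.aemeasurable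
    hstar h1 hstarm h1m hBstar hB1
end
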